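/- Let A = {0,1,2}, B = C = {0,1}, p_A(0) = p_A(2) = 10/21, p_A(1) = 1/21, and v = 0.84 (i.e., 21/25). The noisy distribution p_v(a,b,c) = v·p_A(a)·p_PR(b,c|a) + (1−v)/12, a mixture of the Bonet PR-box wired with the asymmetric input distribution p_A and uniform white noise, is NOT Evans-classical. -/

import Mathlib

open Finset

/-- `p : A → B → C → ℝ` is Evans-classical: it factorizes according to the
Evans causal structure with finite classical latent variables `Λ = Fin nΛ`, `M = Fin nM`. -/
def IsEvansClassical {A B C : Type*} [Fintype A] [Fintype B] [Fintype C]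
    (p : A → B → C → ℝ) : Prop :=
  ∃ (nΛ nM : ℕ) (qΛ : Fin nΛ → ℝ) (qM : Fin nM → ℝ)
    (kA : B → Fin nΛ → A → ℝ) (kB : Fin nΛ → Fin nM → B → ℝ)
    (kC : B → Fin nM → C → ℝ),
    (∀ l, 0 ≤ qΛ l) ∧ (∑ l, qΛ l = 1) ∧
    (∀ m, 0 ≤ qM m) ∧ (∑ m, qM m = 1) ∧
    (∀ b l a, 0 ≤ kA b l a) ∧ (∀ b l, ∑ a, kA b l a = 1) ∧
    (∀ l m b, 0 ≤ kB l m b) ∧ (∀ l m, ∑ b, kB l m b = 1) ∧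
    (∀ b m c, 0 ≤ kC b m c) ∧ (∀ b m, ∑ c, kC b m c = 1) ∧
    (∀ a b c, p a b c = ∑ l, ∑ m, qΛ l * qM m * kA b l a * kB l m b * kC b m c)

/-- The wiring function of the Bonet PR-box: `f(0,b) = 0`, `f(1,b) = b`,
`f(2,b) = b + 1 (mod 2)`. -/
def fBonet (a : Fin 3) (b : Fin 2) : Fin 2 :=
  if a = 0 then 0 else if a = 1 then b else b + 1

/-- The Bonet PR-box conditional distribution: `p_PR(b,c|a) = 1/2` if
`c = b + f(a,b) mod 2` and `0` otherwise. -/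
noncomputable def pPR (a : Fin 3) (b c : Fin 2) : ℝ :=
  if c = b + fBonet a b then 1 / 2 else 0

/-- The asymmetric input distribution `p_A(0) = p_A(2) = 10/21`, `p_A(1) = 1/21`. -/
noncomputable def pAasym (a : Fin 3) : ℝ :=
  if a = 1 then 1 / 21 else 10 / 21

/-!
Only the responses of `a` and `c` to the two values of `b` matter: `λ` may be replaced by a pair
`(a₀, a₁)` with law `P` and `μ` by a pair `(c₀, c₁)` with law `Q`. The choice of `b` then splits
`P ⊗ Q` into a part with law `p(·, 0, ·)` in `(a₀, c₀)` and a part with law `p(·, 1, ·)` in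
`(a₁, c₁)`, so `(P ⊗ Q)(I × E) ≤ p(·, 0, ·)(I) + p(·, 1, ·)(E)` for all sets `I` of pairs `(a₀, c₀)`
and `E` of pairs `(a₁, c₁)`.

The box forbids `(a₀, c₀) ∈ {(0, 1), (2, 0)}` when `b = 0`, so on these two cells `b = 1`, up to
noise, and there `a₁ = 1` must go with `c₁ = 0`. Thus on each cell the sign `±1` of `a₁ ≠ 1` is
positively correlated with that of `c₁ ≠ 0`. As `P ⊗ Q` is a product, strong correlation on both
cells makes `a₁ = 1` and `c₁ = 0` rare (by AM-GM), so rare that `(a₁, c₁) = (1, 0)` is less likely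
than `p(1, 1, 0)`.
-/

lemma sum_sum_le_of_add_eq {X Z : Type*} [Fintype X] [Fintype Z] {K W V : X → Z → ℝ}
    (hW : ∀ x z, 0 ≤ W x z) (hV : ∀ x z, 0 ≤ V x z) (hK : ∀ x z, W x z + V x z = K x z)
    (I : Finset X) (E : Finset Z) :
    ∑ x ∈ I, ∑ z ∈ E, K x z ≤ ∑ x ∈ I, ∑ z, W x z + ∑ z ∈ E, ∑ x, V x z := by
  calc ∑ x ∈ I, ∑ z ∈ E, K x z
      = ∑ x ∈ I, ∑ z ∈ E, W x z + ∑ z ∈ E, ∑ x ∈ I, V x z := by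
        simp only [← hK, sum_add_distrib]
        rw [sum_comm (f := V)]
    _ ≤ ∑ x ∈ I, ∑ z, W x z + ∑ z ∈ E, ∑ x, V x z :=
        add_le_add (sum_le_sum fun x _ => sum_le_univ_sum_of_nonneg (hW x))
          (sum_le_sum fun z _ => sum_le_univ_sum_of_nonneg fun x => hV x z)

/-- `P` and `Q` are laws of response pairs `(a₀, a₁)` and `(c₀, c₁)` obeying the constraints that
a classical model of `p` puts on them. Pairs `x` and `z` stand for `(a₀, c₀)` and `(a₁, c₁)`. -/
structure IsResponseModel {A C : Type*} [Fintype A] [Fintype C] (p : A → Fin 2 → C → ℝ)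
    (P : A → A → ℝ) (Q : C → C → ℝ) : Prop where
  left_nonneg : ∀ a₀ a₁, 0 ≤ P a₀ a₁
  right_nonneg : ∀ c₀ c₁, 0 ≤ Q c₀ c₁
  sum_left : ∑ a₀, ∑ a₁, P a₀ a₁ = 1
  sum_right : ∑ c₀, ∑ c₁, Q c₀ c₁ = 1
  cut : ∀ I E : Finset (A × C), ∑ x ∈ I, ∑ z ∈ E, P x.1 z.1 * Q x.2 z.2 ≤
    ∑ x ∈ I, p x.1 0 x.2 + ∑ z ∈ E, p z.1 1 z.2
  le_zero : ∀ a₀ c₀, p a₀ 0 c₀ ≤ (∑ a₁, P a₀ a₁) * ∑ c₁, Q c₀ c₁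
  le_one : ∀ a₁ c₁, p a₁ 1 c₁ ≤ (∑ a₀, P a₀ a₁) * ∑ c₀, Q c₀ c₁

lemma IsResponseModel.of_add_eq {A C : Type*} [Fintype A] [Fintype C] {p : A → Fin 2 → C → ℝ}
    {P : A → A → ℝ} {Q : C → C → ℝ} {W V : A × C → A × C → ℝ}
    (hP : ∀ a₀ a₁, 0 ≤ P a₀ a₁) (hQ : ∀ c₀ c₁, 0 ≤ Q c₀ c₁)
    (hP₁ : ∑ a₀, ∑ a₁, P a₀ a₁ = 1) (hQ₁ : ∑ c₀, ∑ c₁, Q c₀ c₁ = 1)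
    (hW : ∀ x z, 0 ≤ W x z) (hV : ∀ x z, 0 ≤ V x z)
    (hWV : ∀ x z, W x z + V x z = P x.1 z.1 * Q x.2 z.2)
    (hW₀ : ∀ x, ∑ z, W x z = p x.1 0 x.2) (hV₁ : ∀ z, ∑ x, V x z = p z.1 1 z.2) :
    IsResponseModel p P Q where
  left_nonneg := hP
  right_nonneg := hQ
  sum_left := hP₁
  sum_right := hQ₁
  cut I E := by simpa only [hW₀, hV₁] using sum_sum_le_of_add_eq hW hV hWV I E
  le_zero a₀ c₀ := by
    rw [← hW₀ (a₀, c₀), sum_mul_sum, ← Fintype.sum_prod_type']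
    exact sum_le_sum fun z _ => by linarith [hV (a₀, c₀) z, hWV (a₀, c₀) z]
  le_one a₁ c₁ := by
    rw [← hV₁ (a₁, c₁), sum_mul_sum, ← Fintype.sum_prod_type']
    exact sum_le_sum fun x _ => by linarith [hW x (a₁, c₁), hWV x (a₁, c₁)]

/-- The law of the pair of independent outputs of the kernels `k` and `k'` when both are fed the
same latent variable of law `q`. -/
def jointResponse {L X : Type*} [Fintype L] (q : L → ℝ) (k k' : L → X → ℝ) (x x' : X) : ℝ :=
  ∑ l, q l * (k l x * k' l x')

section jointResponse

variable {L X : Type*} [Fintype L] {q : L → ℝ} {k k' : L → X → ℝ}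

lemma jointResponse_nonneg (hq : ∀ l, 0 ≤ q l) (hk : ∀ l x, 0 ≤ k l x) (hk' : ∀ l x, 0 ≤ k' l x)
    (x x' : X) : 0 ≤ jointResponse q k k' x x' :=
  sum_nonneg fun l _ => mul_nonneg (hq l) (mul_nonneg (hk l x) (hk' l x'))

lemma sum_jointResponse [Fintype X] (hq : ∑ l, q l = 1) (hk : ∀ l, ∑ x, k l x = 1)
    (hk' : ∀ l, ∑ x, k' l x = 1) : ∑ x, ∑ x', jointResponse q k k' x x' = 1 := by
  calc ∑ x, ∑ x', jointResponse q k k' x x'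
      = ∑ x, ∑ l, q l * k l x := by
        refine sum_congr rfl fun x _ => ?_
        simp only [jointResponse]
        rw [sum_comm]
        simp only [← mul_sum, hk', mul_one]
    _ = 1 := by
        rw [sum_comm]
        simp only [← mul_sum, hk, mul_one, hq]

lemma sum_prod_mul_kernels {M Y : Type*} [Fintype M] [Fintype X] [Fintype Y] {g : M → Y → ℝ}
    (f : L → M → ℝ) (hk : ∀ l, ∑ x, k l x = 1) (hg : ∀ m, ∑ y, g m y = 1) :
    ∑ z : X × Y, ∑ l, ∑ m, f l m * (k l z.1 * g m z.2) = ∑ l, ∑ m, f l m := by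
  rw [sum_comm]
  refine sum_congr rfl fun l _ => ?_
  rw [sum_comm]
  refine sum_congr rfl fun m _ => ?_
  rw [← mul_sum, Fintype.sum_prod_type, ← sum_mul_sum, hk, hg, mul_one, mul_one]

end jointResponse

lemma IsEvansClassical.exists_isResponseModel {A C : Type*} [Fintype A] [Fintype C]
    {p : A → Fin 2 → C → ℝ} (h : IsEvansClassical p) :
    ∃ P Q, IsResponseModel p P Q := by
  obtain ⟨nΛ, nM, qΛ, qM, kA, kB, kC, qΛ_nonneg, qΛ_sum, qM_nonneg, qM_sum, kA_nonneg, kA_sum,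
    kB_nonneg, kB_sum, kC_nonneg, kC_sum, hp⟩ := h
  let S (b : Fin 2) (x z : A × C) : ℝ := ∑ l, ∑ m,
    qΛ l * (kA 0 l x.1 * kA 1 l z.1) * (qM m * (kC 0 m x.2 * kC 1 m z.2)) * kB l m b
  have S_nonneg (b x z) : 0 ≤ S b x z :=
    sum_nonneg fun l _ => sum_nonneg fun m _ =>
      mul_nonneg (mul_nonneg (mul_nonneg (qΛ_nonneg l) (mul_nonneg (kA_nonneg _ _ _)
        (kA_nonneg _ _ _))) (mul_nonneg (qM_nonneg m) (mul_nonneg (kC_nonneg _ _ _)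
        (kC_nonneg _ _ _)))) (kB_nonneg _ _ _)
  refine ⟨jointResponse qΛ (kA 0) (kA 1), jointResponse qM (kC 0) (kC 1),
    .of_add_eq (W := S 0) (V := S 1)
      (jointResponse_nonneg qΛ_nonneg (kA_nonneg 0) (kA_nonneg 1))
      (jointResponse_nonneg qM_nonneg (kC_nonneg 0) (kC_nonneg 1))
      (sum_jointResponse qΛ_sum (kA_sum 0) (kA_sum 1))
      (sum_jointResponse qM_sum (kC_sum 0) (kC_sum 1))
      (S_nonneg 0) (S_nonneg 1) (fun x z => ?_) (fun x => ?_) (fun z => ?_)⟩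
  · simp only [S, jointResponse, sum_mul_sum, ← sum_add_distrib, ← mul_add]
    refine sum_congr rfl fun l _ => sum_congr rfl fun m _ => ?_
    rw [← Fin.sum_univ_two (kB l m), kB_sum, mul_one]
  · rw [hp, ← sum_prod_mul_kernels _ (kA_sum 1) (kC_sum 1)]
    refine sum_congr rfl fun z _ => sum_congr rfl fun l _ => sum_congr rfl fun m _ => ?_
    ring
  · rw [hp, ← sum_prod_mul_kernels _ (kA_sum 0) (kC_sum 0)]
    refine sum_congr rfl fun x _ => sum_congr rfl fun l _ => sum_congr rfl fun m _ => ?_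
    ring

/-- The distribution `p_v` of the theorem, at visibility `v = 21/25`. -/
noncomputable def noisyBonet (a : Fin 3) (b c : Fin 2) : ℝ :=
  (21 / 25 : ℝ) * (pAasym a * pPR a b c) + (1 - 21 / 25) / 12

lemma noisyBonet_zero (a : Fin 3) (c : Fin 2) :
    noisyBonet a 0 c = ![![32, 2], ![5, 2], ![2, 32]] a c / 150 := by
  fin_cases a <;> fin_cases c <;> norm_num [noisyBonet, pAasym, pPR, fBonet]

lemma noisyBonet_one (a : Fin 3) (c : Fin 2) :
    noisyBonet a 1 c = ![![2, 32], ![5, 2], ![2, 32]] a c / 150 := by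
  fin_cases a <;> fin_cases c <;>
    norm_num [noisyBonet, pAasym, pPR, fBonet, show (1 + 1 : Fin 2) = 0 from rfl]

/-- The mass of `a₁ = 1, c₁ = 1` or `a₁ ≠ 1, c₁ = 0` in a cell `(a₀, c₀)`, where `p` and `r` are the
masses of `a₀` and `c₀`, and `ρ` and `τ` the parts of them with `a₁ = 1` and `c₁ = 0`. -/
def mismatch (p r ρ τ : ℝ) : ℝ := ρ * (r - τ) + (p - ρ) * τ

lemma mul_sub_two_mul_mismatch (p r ρ τ : ℝ) :
    p * r - 2 * mismatch p r ρ τ = (p - 2 * ρ) * (r - 2 * τ) := by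
  unfold mismatch
  ring

/-- The pairs `(a₁, c₁)` with `a₁ = 1, c₁ = 1` or `a₁ ≠ 1, c₁ = 0`, forbidden by the box when
`b = 1`. -/
def mismatchSet : Finset (Fin 3 × Fin 2) := {(1, 1), (0, 0), (2, 0)}

/-- What the proof uses of a response model of `noisyBonet`, with the mass of `P` scaled to `150`:
`p i` is the mass of `a₀ = i`, and `ρ i` the part of it with `a₁ = 1`; `r j` is the mass of
`c₀ = j`, and `τ j` the part of it with `c₁ = 0`. -/
structure BonetMasses (p ρ : Fin 3 → ℝ) (r τ : Fin 2 → ℝ) : Prop where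
  ρ_nonneg : ∀ i, 0 ≤ ρ i
  ρ_le : ∀ i, ρ i ≤ p i
  τ_nonneg : ∀ j, 0 ≤ τ j
  τ_le : ∀ j, τ j ≤ r j
  sum_p : p 0 + p 1 + p 2 = 150
  sum_r : r 0 + r 1 = 1
  le_mul₀₀ : 32 ≤ p 0 * r 0
  le_mul₁₀ : 5 ≤ p 1 * r 0
  le_mul₂₁ : 32 ≤ p 2 * r 1
  le_sum_mul_sum : 5 ≤ (ρ 0 + ρ 1 + ρ 2) * (τ 0 + τ 1)
  ρ_mul_le₀₁ : ρ 0 * r 1 ≤ 9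
  ρ_mul_le₂₀ : ρ 2 * r 0 ≤ 9
  mul_τ_le₀₁ : p 0 * τ 1 ≤ 11
  mul_τ_le₂₀ : p 2 * τ 0 ≤ 11
  mismatch_le₀₁ : mismatch (p 0) (r 1) (ρ 0) (τ 1) ≤ 8
  mismatch_le₂₀ : mismatch (p 2) (r 0) (ρ 2) (τ 0) ≤ 8
  mismatch_add_le : mismatch (p 0) (r 1) (ρ 0) (τ 1) + mismatch (p 2) (r 0) (ρ 2) (τ 0) ≤ 10

section IsResponseModel

variable {P : Fin 3 → Fin 3 → ℝ} {Q : Fin 2 → Fin 2 → ℝ} {i : Fin 3} {j : Fin 2}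

lemma IsResponseModel.left_one_mul_le (h : IsResponseModel noisyBonet P Q)
    (hij : noisyBonet i 0 j = 2 / 150) : 150 * P i 1 * ∑ c₁, Q j c₁ ≤ 9 := by
  have hcut := h.cut {(i, j)} ({1} ×ˢ univ)
  have hE : ∑ c, noisyBonet 1 1 c = 7 / 150 := by norm_num [noisyBonet_one]
  simp only [sum_singleton, sum_product, ← mul_sum, hij, hE] at hcut
  linarith

lemma IsResponseModel.mul_right_zero_le (h : IsResponseModel noisyBonet P Q)
    (hij : noisyBonet i 0 j = 2 / 150) : 150 * (∑ a₁, P i a₁) * Q j 0 ≤ 11 := by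
  have hcut := h.cut {(i, j)} (univ ×ˢ {0})
  have hE : ∑ a, noisyBonet a 1 0 = 9 / 150 := by
    simp only [Fin.sum_univ_three, noisyBonet_one, Matrix.cons_val]
    norm_num
  simp only [sum_singleton, sum_product, ← sum_mul, hij, hE] at hcut
  linarith

lemma mismatch_eq_sum (P : Fin 3 → Fin 3 → ℝ) (Q : Fin 2 → Fin 2 → ℝ) (i : Fin 3) (j : Fin 2) :
    mismatch (150 * ∑ a₁, P i a₁) (∑ c₁, Q j c₁) (150 * P i 1) (Q j 0) =
      150 * ∑ z ∈ mismatchSet, P i z.1 * Q j z.2 := by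
  rw [mismatchSet, sum_insert (by decide), sum_pair (by decide)]
  simp only [mismatch, Fin.sum_univ_three, Fin.sum_univ_two]
  ring

lemma IsResponseModel.sum_mismatch_le (h : IsResponseModel noisyBonet P Q)
    (I : Finset (Fin 3 × Fin 2)) :
    ∑ x ∈ I, mismatch (150 * ∑ a₁, P x.1 a₁) (∑ c₁, Q x.2 c₁) (150 * P x.1 1) (Q x.2 0) ≤
      150 * ∑ x ∈ I, noisyBonet x.1 0 x.2 + 6 := by
  have hE : ∑ z ∈ mismatchSet, noisyBonet z.1 1 z.2 = 6 / 150 := by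
    rw [mismatchSet, sum_insert (by decide), sum_pair (by decide)]
    simp only [noisyBonet_one, Matrix.cons_val]
    norm_num
  simp only [mismatch_eq_sum, ← mul_sum]
  linarith [h.cut I mismatchSet]

lemma IsResponseModel.mismatch_le (h : IsResponseModel noisyBonet P Q)
    (hij : noisyBonet i 0 j = 2 / 150) :
    mismatch (150 * ∑ a₁, P i a₁) (∑ c₁, Q j c₁) (150 * P i 1) (Q j 0) ≤ 8 := by
  have hle := h.sum_mismatch_le {(i, j)}
  rw [sum_singleton, sum_singleton, hij] at hle
  linarith

lemma IsResponseModel.bonetMasses (h : IsResponseModel noisyBonet P Q) :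
    BonetMasses (fun i => 150 * ∑ a₁, P i a₁) (fun i => 150 * P i 1)
      (fun j => ∑ c₁, Q j c₁) (fun j => Q j 0) := by
  have low₀₁ : noisyBonet 0 0 1 = 2 / 150 := by simp [noisyBonet_zero]
  have low₂₀ : noisyBonet 2 0 0 = 2 / 150 := by simp [noisyBonet_zero]
  have le_zero (i j) : 150 * noisyBonet i 0 j ≤ 150 * (∑ a₁, P i a₁) * ∑ c₁, Q j c₁ := by
    linarith [h.le_zero i j]
  have le_one : 5 / 150 ≤ (P 0 1 + P 1 1 + P 2 1) * (Q 0 0 + Q 1 0) := by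
    simpa [noisyBonet_one, Fin.sum_univ_three] using h.le_one 1 0
  have both := h.sum_mismatch_le {(0, 1), (2, 0)}
  rw [sum_pair (by decide), sum_pair (by decide), low₀₁, low₂₀] at both
  exact
    { ρ_nonneg := fun i => mul_nonneg (by norm_num) (h.left_nonneg i 1)
      ρ_le := fun i => mul_le_mul_of_nonneg_left
        (single_le_sum (fun a₁ _ => h.left_nonneg i a₁) (mem_univ 1)) (by norm_num)
      τ_nonneg := fun j => h.right_nonneg j 0
      τ_le := fun j => single_le_sum (fun c₁ _ => h.right_nonneg j c₁) (mem_univ 0)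
      sum_p := by linarith [h.sum_left, Fin.sum_univ_three fun a₀ => ∑ a₁, P a₀ a₁]
      sum_r := by linarith [h.sum_right, Fin.sum_univ_two fun c₀ => ∑ c₁, Q c₀ c₁]
      le_mul₀₀ := le_trans (by norm_num [noisyBonet_zero]) (le_zero 0 0)
      le_mul₁₀ := le_trans (by norm_num [noisyBonet_zero]) (le_zero 1 0)
      le_mul₂₁ := le_trans (by simp only [noisyBonet_zero, Matrix.cons_val]; norm_num) (le_zero 2 1)
      le_sum_mul_sum := by linarith
      ρ_mul_le₀₁ := h.left_one_mul_le low₀₁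
      ρ_mul_le₂₀ := h.left_one_mul_le low₂₀
      mul_τ_le₀₁ := h.mul_right_zero_le low₀₁
      mul_τ_le₂₀ := h.mul_right_zero_le low₂₀
      mismatch_le₀₁ := h.mismatch_le low₀₁
      mismatch_le₂₀ := h.mismatch_le low₂₀
      mismatch_add_le := by linarith }

end IsResponseModel

lemma BonetMasses.lt_mul {p ρ : Fin 3 → ℝ} {r τ : Fin 2 → ℝ} (h : BonetMasses p ρ r τ) :
    33 / 2 < p 0 * r 1 ∧ 33 / 2 < p 2 * r 0 := by
  obtain ⟨q, hq⟩ : ∃ q, r 0 = q := ⟨_, rfl⟩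
  have hr₁ : r 1 = 1 - q := by linarith [h.sum_r]
  have hp₀ := h.le_mul₀₀
  have hp₁ := h.le_mul₁₀
  have hp₂ := h.le_mul₂₁
  have hq₀ : 0 ≤ q := by linarith [h.τ_nonneg 0, h.τ_le 0]
  have hq₁ : 0 ≤ 1 - q := by linarith [h.τ_nonneg 1, h.τ_le 1]
  rw [hr₁] at hp₂ ⊢
  rw [hq] at hp₀ hp₁ ⊢
  have hquad : 37 * (1 - q) + 32 * q ≤ 150 * (q * (1 - q)) := by
    calc 37 * (1 - q) + 32 * q
        ≤ (p 0 * q + p 1 * q) * (1 - q) + p 2 * (1 - q) * q := by gcongr; linarith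
      _ = (p 0 + p 1 + p 2) * (q * (1 - q)) := by ring
      _ = 150 * (q * (1 - q)) := by rw [h.sum_p]
  obtain ⟨hlo, hhi⟩ : 37 / 100 < q ∧ q < 6597 / 10000 := by constructor <;> nlinarith
  constructor
  · refine lt_of_mul_lt_mul_right ?_ hq₀
    calc 33 / 2 * q < 32 * (1 - q) := by linarith
      _ ≤ p 0 * q * (1 - q) := by gcongr
      _ = p 0 * (1 - q) * q := by ring
  · refine lt_of_mul_lt_mul_right ?_ hq₁
    calc 33 / 2 * (1 - q) < 32 * q := by linarith
      _ ≤ p 2 * (1 - q) * q := by gcongr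
      _ = p 2 * q * (1 - q) := by ring

lemma nonneg_of_mismatch_le {p r ρ τ : ℝ} (hp : 0 ≤ p) (hr : 0 ≤ r) (hpr : 33 / 2 < p * r)
    (hρ : ρ * r ≤ 9) (hτ : p * τ ≤ 11) (hm : mismatch p r ρ τ ≤ 8) :
    0 ≤ p - 2 * ρ ∧ 0 ≤ r - 2 * τ := by
  have hprod := mul_sub_two_mul_mismatch p r ρ τ
  rcases mul_nonneg_iff.mp (show 0 ≤ (p - 2 * ρ) * (r - 2 * τ) by linarith) with hpos | ⟨hρ', hτ'⟩
  · exact hpos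
  exfalso
  have hle : (p * r) * (p * r - 16) ≤ (18 - p * r) * (22 - p * r) :=
    calc (p * r) * (p * r - 16) ≤ (p * r) * ((p - 2 * ρ) * (r - 2 * τ)) := by gcongr; linarith
      _ = ((2 * ρ - p) * r) * (p * (2 * τ - r)) := by ring
      _ ≤ (18 - p * r) * (22 - p * r) := by
        have : 0 ≤ (2 * ρ - p) * r := mul_nonneg (by linarith) hr
        have : 0 ≤ p * (2 * τ - r) := mul_nonneg hp (by linarith)
        gcongr <;> linarith
  linarith

lemma sub_mul_sub_le {x y s t : ℝ} (hx : 16 < x) (hxy : x ≤ y) (hs : s ≤ 16) (ht : t ≤ 16)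
    (hst : s + t ≤ 20) : (x - 16) * (y - 4) ≤ (x - s) * (y - t) := by
  rcases le_total s 4 with hs4 | hs4
  · calc (x - 16) * (y - 4) ≤ (x - 4) * (y - 16) := by linarith
      _ ≤ (x - s) * (y - t) := by gcongr <;> linarith
  · calc (x - 16) * (y - 4) ≤ (x - s) * (y - (20 - s)) := by nlinarith
      _ ≤ (x - s) * (y - t) := by gcongr <;> linarith

-- `5 / 6 * (83 - N)` is a linear lower bound for `√((x - 16) * (y - 4))` in terms of `N = x + y`.
lemma le_sqrt_mul_sqrt {x y s t : ℝ} (hx : 33 / 2 < x) (hxy : x ≤ y) (hmul : 1024 ≤ x * y)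
    (hs : s ≤ 16) (ht : t ≤ 16) (hst : s + t ≤ 20) :
    5 / 6 * (83 - (x + y)) ≤ √(x - s) * √(y - t) := by
  rcases le_total 83 (x + y) with hN | hN
  · exact le_trans (by linarith) (mul_nonneg (Real.sqrt_nonneg _) (Real.sqrt_nonneg _))
  rw [← Real.sqrt_mul (by linarith)]
  refine Real.le_sqrt_of_sq_le (le_trans ?_ (sub_mul_sub_le (by linarith) hxy hs ht hst))
  nlinarith [mul_nonneg (sub_nonneg.2 hx.le) (sub_nonneg.2 hxy),
    mul_nonneg (sub_nonneg.2 hN) (sub_nonneg.2 hxy), sq_nonneg (y - x),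
    mul_nonneg (sub_nonneg.2 hN) (sub_nonneg.2 hx.le)]

lemma lt_sqrt_add_sqrt {x y s t : ℝ} (hx : 33 / 2 < x) (hy : 33 / 2 < y) (hxy : 1024 ≤ x * y)
    (hs : s ≤ 16) (ht : t ≤ 16) (hst : s + t ≤ 20) :
    561 / 2 < 25 * (√(x - s) + √(y - t)) + x + y := by
  wlog hle : x ≤ y generalizing x y s t
  · linarith [this hy hx (by linarith) ht hs (by linarith) (le_of_not_ge hle)]
  have hN : 64 ≤ x + y := by nlinarith [sq_nonneg (x - y)]
  have hprod := le_sqrt_mul_sqrt hx hle hxy hs ht hst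
  have hprod₀ : 0 ≤ √(x - s) * √(y - t) := by positivity
  have hsq : x + y - 20 + 2 * (√(x - s) * √(y - t)) ≤ (√(x - s) + √(y - t)) ^ 2 := by
    rw [add_sq, Real.sq_sqrt (by linarith), Real.sq_sqrt (by linarith)]
    linarith
  rcases le_total (x + y) 83 with hN' | hN'
  · suffices 561 / 2 - (x + y) < 25 * (√(x - s) + √(y - t)) by linarith
    refine lt_of_pow_lt_pow_left₀ 2 (by positivity) ?_
    calc (561 / 2 - (x + y)) ^ 2 < 625 * ((355 - 2 * (x + y)) / 3) := by nlinarith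
      _ ≤ (25 * (√(x - s) + √(y - t))) ^ 2 := by linarith
  · suffices 79 / 10 < √(x - s) + √(y - t) by linarith
    exact lt_of_pow_lt_pow_left₀ 2 (by positivity) (by linarith)

-- AM-GM, weighted for `x ≈ (25 / 2) ^ 2 * y`: in the application the first factors sum to
-- `150 + p 1 ≈ (25 / 2) ^ 2` and the second factors to `1`.
lemma mul_le_add_of_sq_le {x y g : ℝ} (hx : 0 ≤ x) (hy : 0 ≤ y) (hg : g ^ 2 ≤ x * y) :
    25 * g ≤ x + 625 / 4 * y := by
  linarith [two_mul_le_add_of_sq_le_mul (r := 25 / 2 * g) hx (show 0 ≤ 625 / 4 * y by positivity)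
    (by linarith)]

lemma sqrt_sub_mismatch_le {p r ρ τ : ℝ} (hp : 0 ≤ p - 2 * ρ) (hr : 0 ≤ r - 2 * τ) :
    25 * √(p * r - 2 * mismatch p r ρ τ) ≤ (p - 2 * ρ) + 625 / 4 * (r - 2 * τ) := by
  refine mul_le_add_of_sq_le hp hr (le_of_eq ?_)
  rw [mul_sub_two_mul_mismatch, Real.sq_sqrt (mul_nonneg hp hr)]

lemma BonetMasses.false {p ρ : Fin 3 → ℝ} {r τ : Fin 2 → ℝ} (h : BonetMasses p ρ r τ) :
    False := by
  obtain ⟨hx, hy⟩ := h.lt_mul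
  have hp (i) : 0 ≤ p i := (h.ρ_nonneg i).trans (h.ρ_le i)
  have hr (j) : 0 ≤ r j := (h.τ_nonneg j).trans (h.τ_le j)
  have hcell₀₁ := nonneg_of_mismatch_le (hp 0) (hr 1) hx h.ρ_mul_le₀₁ h.mul_τ_le₀₁ h.mismatch_le₀₁
  have hcell₂₀ := nonneg_of_mismatch_le (hp 2) (hr 0) hy h.ρ_mul_le₂₀ h.mul_τ_le₂₀ h.mismatch_le₂₀
  -- `447 / 100 < √20`
  have hcorner : 25 * (447 / 100) ≤ 2 * (ρ 0 + ρ 1 + ρ 2) + 625 / 4 * (2 * (τ 0 + τ 1)) :=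
    mul_le_add_of_sq_le (by linarith [h.ρ_nonneg 0, h.ρ_nonneg 1, h.ρ_nonneg 2])
      (by linarith [h.τ_nonneg 0, h.τ_nonneg 1]) (by linarith [h.le_sum_mul_sum])
  have hdiag : 1024 ≤ p 0 * r 1 * (p 2 * r 0) := by
    calc (1024 : ℝ) = 32 * 32 := by norm_num
      _ ≤ p 0 * r 0 * (p 2 * r 1) :=
        mul_le_mul h.le_mul₀₀ h.le_mul₂₁ (by norm_num) (mul_nonneg (hp 0) (hr 0))
      _ = p 0 * r 1 * (p 2 * r 0) := by ring
  have hsum (i) : p i = p i * r 0 + p i * r 1 := by rw [← mul_add, h.sum_r, mul_one]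
  have hlt := lt_sqrt_add_sqrt hx hy hdiag (s := 2 * mismatch (p 0) (r 1) (ρ 0) (τ 1))
    (t := 2 * mismatch (p 2) (r 0) (ρ 2) (τ 0)) (by linarith [h.mismatch_le₀₁])
    (by linarith [h.mismatch_le₂₀]) (by linarith [h.mismatch_add_le])
  linarith [sqrt_sub_mismatch_le hcell₀₁.1 hcell₀₁.2,
    sqrt_sub_mismatch_le hcell₂₀.1 hcell₂₀.2, hsum 0, hsum 2, h.sum_p, h.sum_r,
    h.le_mul₀₀, h.le_mul₂₁, h.ρ_le 1]

/-- With visibility `v = 0.84 = 21/25`, the noisy distribution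
`p_v(a,b,c) = v·p_A(a)·p_PR(b,c|a) + (1−v)/12`, a mixture of the Bonet PR-box wired
with the asymmetric inputs `p_A` and uniform white noise, is NOT Evans-classical. -/
theorem noisy_asym_bonet_prbox_not_evansClassical :
    ¬ IsEvansClassical (fun (a : Fin 3) (b c : Fin 2) =>
        (21 / 25 : ℝ) * (pAasym a * pPR a b c) + (1 - 21 / 25) / 12) := by
  intro h
  obtain ⟨P, Q, hPQ⟩ := IsEvansClassical.exists_isResponseModel (p := noisyBonet) h
  exact hPQ.bonetMasses.false
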